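/- Let m ∈ ℕ, ε > 0, κ > 0, let V : ℝᵐ → ℝ be twice continuously differentiable, and suppose q : ℝᵐ × ℝᵐ × ℝ → ℝ is twice continuously differentiable in (ξ,η), continuously differentiable in s, and satisfies ∂q/∂s = ⟨η, ∇_ξq⟩ − ⟨∇_ξV(ξ) + κη, ∇_ηq⟩ + εκ Δ_ηq at every (ξ,η,s). Define p(ξ,ϑ,s) := q(ξ,−ϑ,s)·exp(−(1/ε)((1/2)‖ϑ‖² + V(ξ))). Then p satisfies the kinetic Fokker–Planck equation ∂p/∂s = −⟨ϑ, ∇_ξp⟩ + ∇_ϑ·(p (∇_ξV(ξ) + κϑ)) + εκ Δ_ϑp at every (ξ,ϑ,s). -/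

import Mathlib

open scoped BigOperators

/-- Partial derivative in the `i`-th coordinate direction of the first block variable `ξ`. -/
noncomputable def pdXi {m : ℕ} (i : Fin m)
    (g : EuclideanSpace ℝ (Fin m) → EuclideanSpace ℝ (Fin m) → ℝ)
    (ξ η : EuclideanSpace ℝ (Fin m)) : ℝ :=
  fderiv ℝ (fun ξ' => g ξ' η) ξ (EuclideanSpace.single i 1)

/-- Partial derivative in the `i`-th coordinate direction of the second block variable. -/
noncomputable def pdEta {m : ℕ} (i : Fin m)
    (g : EuclideanSpace ℝ (Fin m) → EuclideanSpace ℝ (Fin m) → ℝ)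
    (ξ η : EuclideanSpace ℝ (Fin m)) : ℝ :=
  fderiv ℝ (fun η' => g ξ η') η (EuclideanSpace.single i 1)

/-- Partial derivative in the `i`-th coordinate direction of a scalar function on `ℝᵐ`. -/
noncomputable def pd {m : ℕ} (i : Fin m) (f : EuclideanSpace ℝ (Fin m) → ℝ)
    (x : EuclideanSpace ℝ (Fin m)) : ℝ :=
  fderiv ℝ f x (EuclideanSpace.single i 1)

/-!
Each derivative of the Gibbs weight `w` is a multiple of `w`: `∂w/∂ξᵢ = -(1/ε) ∂ᵢV w` and
`∂w/∂ϑᵢ = -(1/ε) ϑᵢ w`. Applied to `q(ξ, -ϑ) w`, the Fokker–Planck operator produces terms of order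
zero in `q` that cancel: `(1/ε) ⟨ϑ, ∇V⟩` from the transport against the force, and
`κ (m - ‖ϑ‖²/ε)` from the friction against the diffusion. Among the terms of order one, the cross
term of the diffusion is twice the friction term with the opposite sign, so it reverses the friction
just as the substitution `η = -ϑ` requires. What remains is the backward operator at `(ξ, -ϑ)` times
`w`, and `w` does not depend on time.
-/

section PartialDerivative

variable {m : ℕ} (i : Fin m) {f g : EuclideanSpace ℝ (Fin m) → ℝ} {x : EuclideanSpace ℝ (Fin m)}

lemma pd_add (hf : DifferentiableAt ℝ f x) (hg : DifferentiableAt ℝ g x) :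
    pd i (fun y => f y + g y) x = pd i f x + pd i g x := by
  simp only [pd, fderiv_fun_add hf hg, add_apply]

lemma pd_add_const (c : ℝ) : pd i (fun y => f y + c) x = pd i f x := by
  simp only [pd, fderiv_add_const]

lemma pd_const_add (c : ℝ) : pd i (fun y => c + f y) x = pd i f x := by
  simp only [pd, fderiv_const_add]

lemma pd_const_mul (c : ℝ) : pd i (fun y => c * f y) x = c * pd i f x := by
  have h : fderiv ℝ (fun y => c * f y) x = c • fderiv ℝ f x :=
    congrFun (fderiv_const_smul_field c) x
  simp only [pd, h, smul_apply, smul_eq_mul]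

lemma pd_mul (hf : DifferentiableAt ℝ f x) (hg : DifferentiableAt ℝ g x) :
    pd i (fun y => f y * g y) x = pd i f x * g x + f x * pd i g x := by
  simp only [pd, fderiv_fun_mul hf hg, add_apply, smul_apply, smul_eq_mul]
  ring

lemma pd_exp (hf : DifferentiableAt ℝ f x) :
    pd i (fun y => Real.exp (f y)) x = pd i f x * Real.exp (f x) := by
  simp only [pd, fderiv_exp hf, smul_apply, smul_eq_mul, mul_comm]

lemma pd_comp_neg : pd i (fun y => f (-y)) x = -pd i f (-x) := by
  have h : fderiv ℝ (fun y => f (-y)) x = -fderiv ℝ f (-x) := by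
    simpa using fderiv_comp_smul (f := f) (x := x) (-1 : ℝ)
  simp only [pd, h, neg_apply]

lemma pd_norm_sq : pd i (fun y => ‖y‖ ^ 2) x = 2 * x i := by
  simp [pd, fderiv_norm_sq_apply, EuclideanSpace.inner_single_right]

lemma pd_coord : pd i (fun y => y i) x = 1 := by
  have h : HasFDerivAt (fun y : EuclideanSpace ℝ (Fin m) => y i)
      (EuclideanSpace.proj (𝕜 := ℝ) i) x :=
    (EuclideanSpace.proj (𝕜 := ℝ) i).hasFDerivAt
  simp [pd, h.fderiv]

lemma pd_mul_const_add_const_mul_coord (a b : ℝ) (hf : DifferentiableAt ℝ f x) :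
    pd i (fun y => f y * (a + b * y i)) x = pd i f x * (a + b * x i) + f x * b := by
  rw [pd_mul i hf (by fun_prop), pd_const_add, pd_const_mul, pd_coord, mul_one]

lemma differentiable_pd (hf : ContDiff ℝ 2 f) : Differentiable ℝ (pd i f) :=
  ((hf.fderiv_right (m := 1) le_rfl).differentiable one_ne_zero).clm_apply
    (differentiable_const _)

end PartialDerivative

section KineticTransform

lemma pdEta_eq_pd {m : ℕ} (i : Fin m)
    (g : EuclideanSpace ℝ (Fin m) → EuclideanSpace ℝ (Fin m) → ℝ)
    (ξ η : EuclideanSpace ℝ (Fin m)) : pdEta i g ξ η = pd i (g ξ) η := rfl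

variable {m : ℕ} (ε κ : ℝ) (V : EuclideanSpace ℝ (Fin m) → ℝ)
  (g : EuclideanSpace ℝ (Fin m) → EuclideanSpace ℝ (Fin m) → ℝ)

/-- The (unnormalised) Gibbs density `exp (-H / ε)` of the Hamiltonian
`H ξ ϑ = ‖ϑ‖² / 2 + V ξ` at temperature `ε`. -/
noncomputable def gibbsWeight (ξ ϑ : EuclideanSpace ℝ (Fin m)) : ℝ :=
  Real.exp (-(1/ε) * ((1/2) * ‖ϑ‖^2 + V ξ))

/-- Velocity reversal followed by multiplication with the Gibbs density: the map `q ↦ p` at a fixed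
time. -/
noncomputable def kineticTransform (ξ ϑ : EuclideanSpace ℝ (Fin m)) : ℝ :=
  g ξ (-ϑ) * gibbsWeight ε V ξ ϑ

/-- The kinetic backward Kolmogorov operator `⟨η, ∇_ξ g⟩ - ⟨∇V + κη, ∇_η g⟩ + εκ Δ_η g`. -/
noncomputable def kineticBackwardOperator (ξ η : EuclideanSpace ℝ (Fin m)) : ℝ :=
  (∑ i, η i * pdXi i g ξ η) - (∑ i, (pd i V ξ + κ * η i) * pdEta i g ξ η)
    + ε * κ * ∑ i, pdEta i (pdEta i g) ξ η

/-- The kinetic Fokker–Planck operator `-⟨ϑ, ∇_ξ g⟩ + ∇_ϑ · (g (∇V + κϑ)) + εκ Δ_ϑ g`. -/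
noncomputable def kineticFokkerPlanckOperator (ξ ϑ : EuclideanSpace ℝ (Fin m)) : ℝ :=
  -(∑ i, ϑ i * pdXi i g ξ ϑ) + (∑ i, pdEta i (fun a b => g a b * (pd i V a + κ * b i)) ξ ϑ)
    + ε * κ * ∑ i, pdEta i (pdEta i g) ξ ϑ

variable {ε V g} {ξ ϑ : EuclideanSpace ℝ (Fin m)} (i : Fin m)

lemma differentiable_gibbsWeight : Differentiable ℝ (gibbsWeight ε V ξ) :=
  ((((differentiable_id.norm_sq ℝ).const_mul _).add_const _).const_mul _).exp

lemma pdEta_gibbsWeight :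
    pdEta i (gibbsWeight ε V) ξ ϑ = -(1/ε) * ϑ i * gibbsWeight ε V ξ ϑ := by
  calc pdEta i (gibbsWeight ε V) ξ ϑ
      = pd i (fun b => -(1/ε) * ((1/2) * ‖b‖^2 + V ξ)) ϑ * gibbsWeight ε V ξ ϑ :=
        pd_exp i ((((differentiable_id.norm_sq ℝ).const_mul _).add_const _).const_mul _ ϑ)
    _ = -(1/ε) * ϑ i * gibbsWeight ε V ξ ϑ := by
        rw [pd_const_mul, pd_add_const, pd_const_mul, pd_norm_sq]
        ring

lemma differentiableAt_gibbsWeight_left (hV : DifferentiableAt ℝ V ξ) :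
    DifferentiableAt ℝ (fun a => gibbsWeight ε V a ϑ) ξ :=
  ((hV.const_add _).const_mul _).exp

lemma pdXi_gibbsWeight (hV : DifferentiableAt ℝ V ξ) :
    pdXi i (gibbsWeight ε V) ξ ϑ = -(1/ε) * pd i V ξ * gibbsWeight ε V ξ ϑ := by
  calc pdXi i (gibbsWeight ε V) ξ ϑ
      = pd i (fun a => -(1/ε) * ((1/2) * ‖ϑ‖^2 + V a)) ξ * gibbsWeight ε V ξ ϑ :=
        pd_exp i ((hV.const_add _).const_mul _)
    _ = -(1/ε) * pd i V ξ * gibbsWeight ε V ξ ϑ := by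
        rw [pd_const_mul, pd_const_add]

lemma differentiableAt_kineticTransform (hg : DifferentiableAt ℝ (g ξ) (-ϑ)) :
    DifferentiableAt ℝ (kineticTransform ε V g ξ) ϑ :=
  (hg.comp ϑ differentiableAt_id.neg).mul (differentiable_gibbsWeight ϑ)

lemma pdXi_kineticTransform (hV : DifferentiableAt ℝ V ξ)
    (hg : DifferentiableAt ℝ (fun a => g a (-ϑ)) ξ) :
    pdXi i (kineticTransform ε V g) ξ ϑ
      = kineticTransform ε V (pdXi i g) ξ ϑ
        - 1/ε * pd i V ξ * kineticTransform ε V g ξ ϑ := by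
  calc pdXi i (kineticTransform ε V g) ξ ϑ
      = pdXi i g ξ (-ϑ) * gibbsWeight ε V ξ ϑ + g ξ (-ϑ) * pdXi i (gibbsWeight ε V) ξ ϑ :=
        pd_mul i hg (differentiableAt_gibbsWeight_left hV)
    _ = _ := by
        rw [pdXi_gibbsWeight i hV, kineticTransform, kineticTransform]
        ring

lemma pdEta_kineticTransform (hg : DifferentiableAt ℝ (g ξ) (-ϑ)) :
    pdEta i (kineticTransform ε V g) ξ ϑ
      = -kineticTransform ε V (pdEta i g) ξ ϑ
        - 1/ε * ϑ i * kineticTransform ε V g ξ ϑ := by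
  calc pdEta i (kineticTransform ε V g) ξ ϑ
      = pd i (fun b => g ξ (-b)) ϑ * gibbsWeight ε V ξ ϑ
          + g ξ (-ϑ) * pdEta i (gibbsWeight ε V) ξ ϑ :=
        pd_mul i (hg.comp ϑ differentiableAt_id.neg) (differentiable_gibbsWeight ϑ)
    _ = -pdEta i g ξ (-ϑ) * gibbsWeight ε V ξ ϑ
          + g ξ (-ϑ) * (-(1/ε) * ϑ i * gibbsWeight ε V ξ ϑ) := by
        rw [pd_comp_neg, pdEta_gibbsWeight, pdEta_eq_pd]
    _ = _ := by
        rw [kineticTransform, kineticTransform]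
        ring

lemma pdEta_kineticTransform_mul_force (F : EuclideanSpace ℝ (Fin m) → ℝ)
    (hg : DifferentiableAt ℝ (g ξ) (-ϑ)) :
    pdEta i (fun a b => kineticTransform ε V g a b * (F a + κ * b i)) ξ ϑ
      = pdEta i (kineticTransform ε V g) ξ ϑ * (F ξ + κ * ϑ i)
        + kineticTransform ε V g ξ ϑ * κ :=
  pd_mul_const_add_const_mul_coord i _ _ (differentiableAt_kineticTransform hg)

lemma pdEta_pdEta_kineticTransform (hg : Differentiable ℝ (g ξ))
    (hg' : DifferentiableAt ℝ (pdEta i g ξ) (-ϑ)) :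
    pdEta i (pdEta i (kineticTransform ε V g)) ξ ϑ
      = kineticTransform ε V (pdEta i (pdEta i g)) ξ ϑ
        + 2 * (1/ε) * ϑ i * kineticTransform ε V (pdEta i g) ξ ϑ
        + ((1/ε * ϑ i) ^ 2 - 1/ε) * kineticTransform ε V g ξ ϑ := by
  have hfirst : pdEta i (kineticTransform ε V g) ξ = fun b =>
      -1 * kineticTransform ε V (pdEta i g) ξ b
        + kineticTransform ε V g ξ b * (0 + -(1/ε) * b i) := by
    funext b
    rw [pdEta_kineticTransform i (hg (-b))]
    ring
  have hT := differentiableAt_kineticTransform (ε := ε) (V := V) (hg (-ϑ))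
  have hT' := differentiableAt_kineticTransform (ε := ε) (V := V) hg'
  calc pdEta i (pdEta i (kineticTransform ε V g)) ξ ϑ
      = pd i (fun b => -1 * kineticTransform ε V (pdEta i g) ξ b
          + kineticTransform ε V g ξ b * (0 + -(1/ε) * b i)) ϑ := by
        rw [pdEta_eq_pd, hfirst]
    _ = -1 * pdEta i (kineticTransform ε V (pdEta i g)) ξ ϑ
          + (pdEta i (kineticTransform ε V g) ξ ϑ * (0 + -(1/ε) * ϑ i)
            + kineticTransform ε V g ξ ϑ * -(1/ε)) := by
        rw [pd_add i (hT'.const_mul _) (hT.fun_mul (by fun_prop)), pd_const_mul,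
          pd_mul_const_add_const_mul_coord i _ _ hT, pdEta_eq_pd, pdEta_eq_pd]
    _ = _ := by
        rw [pdEta_kineticTransform i hg', pdEta_kineticTransform i (hg (-ϑ))]
        ring

theorem kineticFokkerPlanckOperator_kineticTransform (hε : ε ≠ 0) (hV : DifferentiableAt ℝ V ξ)
    (hgξ : DifferentiableAt ℝ (fun a => g a (-ϑ)) ξ) (hgη : Differentiable ℝ (g ξ))
    (hgηη : ∀ i, DifferentiableAt ℝ (pdEta i g ξ) (-ϑ)) :
    kineticFokkerPlanckOperator ε κ V (kineticTransform ε V g) ξ ϑ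
      = kineticTransform ε V (kineticBackwardOperator ε κ V g) ξ ϑ := by
  simp only [kineticFokkerPlanckOperator, pdXi_kineticTransform _ hV hgξ,
    pdEta_kineticTransform_mul_force κ _ (pd _ V) (hgη (-ϑ)), pdEta_kineticTransform _ (hgη (-ϑ)),
    pdEta_pdEta_kineticTransform _ hgη (hgηη _)]
  simp only [kineticTransform, kineticBackwardOperator, PiLp.neg_apply]
  simp only [add_mul, sub_mul, Finset.mul_sum, Finset.sum_mul, ← Finset.sum_sub_distrib,
    ← Finset.sum_add_distrib, ← Finset.sum_neg_distrib]
  refine Finset.sum_congr rfl fun i _ => ?_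
  field_simp
  ring

end KineticTransform

theorem kinetic_transform_to_fokker_planck_general {m : ℕ} {ε : ℝ} (hε : ε ≠ 0) (κ : ℝ)
    {V : EuclideanSpace ℝ (Fin m) → ℝ} (hV : Differentiable ℝ V)
    {q : EuclideanSpace ℝ (Fin m) → EuclideanSpace ℝ (Fin m) → ℝ → ℝ}
    (hqξ : ∀ η s, Differentiable ℝ fun ξ => q ξ η s)
    (hqη : ∀ ξ s, Differentiable ℝ fun η => q ξ η s)
    (hqηη : ∀ i ξ s, Differentiable ℝ (pdEta i (fun a b => q a b s) ξ))
    (hq : ∀ ξ η s, HasDerivAt (q ξ η)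
      (kineticBackwardOperator ε κ V (fun a b => q a b s) ξ η) s)
    (ξ ϑ : EuclideanSpace ℝ (Fin m)) (s : ℝ) :
    HasDerivAt (fun σ => kineticTransform ε V (fun a b => q a b σ) ξ ϑ)
      (kineticFokkerPlanckOperator ε κ V (kineticTransform ε V fun a b => q a b s) ξ ϑ) s := by
  rw [kineticFokkerPlanckOperator_kineticTransform κ hε (hV ξ) (hqξ (-ϑ) s ξ) (hqη ξ s)
    fun i => hqηη i ξ s (-ϑ)]
  exact (hq ξ (-ϑ) s).mul_const (gibbsWeight ε V ξ ϑ)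

/-- the transform `p(ξ,ϑ,s) := q(ξ,−ϑ,s)·exp(−(1/ε)(‖ϑ‖²/2 + V(ξ)))`
of a solution `q` of the reversed kinetic backward Kolmogorov equation satisfies the
kinetic Fokker–Planck equation. -/
theorem kinetic_transform_to_fokker_planck
    (m : ℕ) (ε κ : ℝ) (hε : 0 < ε) (hκ : 0 < κ)
    (V : EuclideanSpace ℝ (Fin m) → ℝ) (hV : ContDiff ℝ 2 V)
    (q : EuclideanSpace ℝ (Fin m) → EuclideanSpace ℝ (Fin m) → ℝ → ℝ)
    (hqx : ∀ s, ContDiff ℝ 2 fun p : EuclideanSpace ℝ (Fin m) × EuclideanSpace ℝ (Fin m) =>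
      q p.1 p.2 s)
    (hqs : ∀ ξ η, ContDiff ℝ 1 fun s => q ξ η s)
    (hq : ∀ (ξ η : EuclideanSpace ℝ (Fin m)) (s : ℝ),
      deriv (fun σ => q ξ η σ) s
        = (∑ i, η i * pdXi i (fun a b => q a b s) ξ η)
          - (∑ i, (pd i V ξ + κ * η i) * pdEta i (fun a b => q a b s) ξ η)
          + ε * κ * ∑ i, pdEta i (fun a b => pdEta i (fun c d => q c d s) a b) ξ η)
    (p : EuclideanSpace ℝ (Fin m) → EuclideanSpace ℝ (Fin m) → ℝ → ℝ)
    (hp : ∀ ξ ϑ s, p ξ ϑ s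
      = q ξ (-ϑ) s * Real.exp (-(1/ε) * ((1/2) * ‖ϑ‖^2 + V ξ))) :
    ∀ (ξ ϑ : EuclideanSpace ℝ (Fin m)) (s : ℝ),
      deriv (fun σ => p ξ ϑ σ) s
        = -(∑ i, ϑ i * pdXi i (fun a b => p a b s) ξ ϑ)
          + (∑ i, pdEta i (fun a b => p a b s * (pd i V a + κ * b i)) ξ ϑ)
          + ε * κ * ∑ i, pdEta i (fun a b => pdEta i (fun c d => p c d s) a b) ξ ϑ := by
  have hqη : ∀ ξ s, ContDiff ℝ 2 fun η => q ξ η s := fun ξ s =>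
    (hqx s).comp (contDiff_prodMk_right ξ)
  have hqξ : ∀ η s, ContDiff ℝ 2 fun ξ => q ξ η s := fun η s =>
    (hqx s).comp (contDiff_prodMk_left η)
  obtain rfl : p = fun ξ ϑ s => kineticTransform ε V (fun a b => q a b s) ξ ϑ := by
    funext ξ ϑ s
    exact hp ξ ϑ s
  intro ξ ϑ s
  exact (kinetic_transform_to_fokker_planck_general hε.ne' κ (hV.differentiable two_ne_zero)
    (fun η s => (hqξ η s).differentiable two_ne_zero)
    (fun ξ s => (hqη ξ s).differentiable two_ne_zero)
    (fun i ξ s => differentiable_pd i (hqη ξ s))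
    (fun ξ η s => ((hqs ξ η).differentiable one_ne_zero s).hasDerivAt.congr_deriv (hq ξ η s))
    ξ ϑ s).deriv
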